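/- arXiv:1510.07888 — 4 statements merged into one kernel-verified Lean document; each statement's English description precedes it below -/
import Mathlib

section
/- Let total endowments X, Y > 0 of goods 1 and 2 be split between trader A, endowed with (s1, s2), and trader C, endowed with (X−s1, Y−s2), where 0 ≤ s1 ≤ X and 0 ≤ s2 ≤ Y. Let F = (f1, f2) satisfy 0 < f1 < X and 0 < f2 < Y, and set g = √(f2/f1) and h = √((Y−f2)/(X−f1)). Suppose the purchase-tax rate r > 0 satisfies h = (1+r)²·g, that s1 > f1 and s2 < f2, and that (f2 − s2)/(s1 − f1) = √(g·h). Then for any token endowment n > 0, the prices p = n/(r·(s1 − f1)) and q = n/(r·(f2 − s2)) satisfy p/q = √(g·h), the bundle (f1, f2) maximizes u(x,y) = √x + √y over A's budget set B(p,q,r,n,s1,s2), and the bundle (X−f1, Y−f2) maximizes u over C's budget set B(p,q,r,n,X−s1,Y−s2); hence these prices and this allocation form a market equilibrium (both traders optimize and both goods markets clear). -/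
/-- Utility function u(x,y) = √x + √y. -/
noncomputable def u (x y : ℝ) : ℝ := Real.sqrt x + Real.sqrt y

/-- Budget set of a trader with endowment (s,t), n tokens, prices p,q,
purchase-tax rate r: constraints D, E, F together with nonnegativity. -/
def B (p q r n s t : ℝ) : Set (ℝ × ℝ) :=
  {xy | 0 ≤ xy.1 ∧ 0 ≤ xy.2 ∧
    p * (xy.1 - s) + (1 + r) * q * (xy.2 - t) ≤ n ∧
    (1 + r) * p * (xy.1 - s) + (1 + r) * q * (xy.2 - t) ≤ n ∧
    (1 + r) * p * (xy.1 - s) + q * (xy.2 - t) ≤ n}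

/-!
Each trader sells one good and buys the other, and the tokens pay exactly the tax on the purchase.
The trade therefore exhausts the constraint in which only the bought good is taxed, and the other
two constraints have slack. Since the square root lies below its tangent lines, a bundle is optimal
as soon as the slope of this one constraint is its marginal rate of substitution. The taxed slopes
`p / ((1 + r) q)` and `(1 + r) p / q` equal `g` and `h` simultaneously because `h = (1 + r) ^ 2 * g`
makes the geometric mean of `g` and `h`, which is `p / q`, equal to `(1 + r) * g`. Exchanging the
names of the goods turns one trader into the other.
-/

open Real

theorem two_mul_sqrt_mul_sqrt_sub_sqrt_le {a x : ℝ} (ha : 0 ≤ a) (hx : 0 ≤ x) :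
    2 * √a * (√x - √a) ≤ x - a := by
  linarith [two_mul_le_add_sq √a √x, sq_sqrt ha, sq_sqrt hx]

theorem u_le_u_of_linear_le {a b x y α β : ℝ} (ha : 0 < a) (hb : 0 ≤ b) (hx : 0 ≤ x) (hy : 0 ≤ y)
    (hα : 0 < α) (htangent : α * √a = β * √b) (hle : α * x + β * y ≤ α * a + β * b) :
    u x y ≤ u a b := by
  have hpos : 0 < α * √a := mul_pos hα (sqrt_pos.2 ha)
  have hβ : 0 < β := pos_of_mul_pos_left (htangent ▸ hpos) (sqrt_nonneg b)
  have hgain : 2 * (α * √a) * (u x y - u a b) ≤ 0 :=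
    calc 2 * (α * √a) * (u x y - u a b)
        = α * (2 * √a * (√x - √a)) + β * (2 * √b * (√y - √b)) := by
          unfold u
          linear_combination 2 * (√y - √b) * htangent
      _ ≤ α * (x - a) + β * (y - b) := by
          gcongr
          · exact two_mul_sqrt_mul_sqrt_sub_sqrt_le ha.le hx
          · exact two_mul_sqrt_mul_sqrt_sub_sqrt_le hb hy
      _ ≤ 0 := by linarith
  exact sub_nonpos.1 (nonpos_of_mul_nonpos_right hgain (by positivity))

theorem u_comm (x y : ℝ) : u x y = u y x :=
  add_comm √x √y

theorem mem_B_swap {p q r n s t x y : ℝ} :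
    (y, x) ∈ B q p r n t s ↔ (x, y) ∈ B p q r n s t := by
  simp only [B, Set.mem_ofPred_eq]
  grind

/-- `(a, b)` is a demand of the trader with endowment `(s, t)` and `n` tokens, facing prices `p`,
`q` and purchase-tax rate `r`: it is affordable and maximizes `u` over the budget set. A
market equilibrium asks this of each trader. -/
def IsDemand (p q r n s t a b : ℝ) : Prop :=
  (a, b) ∈ B p q r n s t ∧ ∀ xy ∈ B p q r n s t, u xy.1 xy.2 ≤ u a b

theorem IsDemand.swap {p q r n s t a b : ℝ} (h : IsDemand p q r n s t a b) :
    IsDemand q p r n t s b a := by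
  refine ⟨mem_B_swap.2 h.1, fun xy hxy => ?_⟩
  rw [u_comm xy.1, u_comm b]
  exact h.2 xy.swap (mem_B_swap.2 hxy)

theorem isDemand_of_tangent {p q r n s t a b : ℝ} (hp : 0 < p) (hn : 0 ≤ n)
    (ha : 0 < a) (hb : 0 ≤ b) (hbalance : p * (s - a) = q * (b - t))
    (htax : r * (q * (b - t)) = n) (htangent : p * √a = (1 + r) * q * √b) :
    IsDemand p q r n s t a b := by
  have hD : p * (a - s) + (1 + r) * q * (b - t) = n := by
    linear_combination htax - hbalance
  have hE : (1 + r) * p * (a - s) + (1 + r) * q * (b - t) = 0 := by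
    linear_combination -(1 + r) * hbalance
  have hF : (1 + r) * p * (a - s) + q * (b - t) = -n := by
    linear_combination -(1 + r) * hbalance - htax
  constructor
  · exact ⟨ha.le, hb, hD.le, hE.trans_le hn, hF.trans_le (by linarith)⟩
  · rintro ⟨x, y⟩ ⟨hx, hy, hxy, -, -⟩
    exact u_le_u_of_linear_le ha hb hx hy hp htangent (by linarith)

theorem sqrt_div_mul_sqrt (b : ℝ) {a : ℝ} (ha : 0 < a) : √(b / a) * √a = √b := by
  rw [← sqrt_mul' _ ha.le, div_mul_cancel₀ b ha.ne']

theorem sqrt_mul_sq_mul_self {c g : ℝ} (hc : 0 ≤ c) (hg : 0 ≤ g) : √(g * (c ^ 2 * g)) = c * g := by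
  rw [show g * (c ^ 2 * g) = (c * g) ^ 2 by ring, sqrt_sq (mul_nonneg hc hg)]

/-- Edgeworth-box equilibrium theorem: under the tangency-ratio and slope
conditions, the prices p = n/(r(s₁−f₁)), q = n/(r(f₂−s₂)) together with the
allocation F = (f₁,f₂) to A and (X−f₁, Y−f₂) to C form a market equilibrium:
p/q = √(gh), and each trader's bundle maximizes utility over their budget set
(the goods markets clear since the bundles sum to the total endowments). -/
theorem edgeworth_equilibrium
    (X Y s1 s2 f1 f2 g h r n p q : ℝ)
    (hX : 0 < X) (hY : 0 < Y)
    (hs1 : 0 ≤ s1) (hs1X : s1 ≤ X) (hs2 : 0 ≤ s2) (hs2Y : s2 ≤ Y)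
    (hf1 : 0 < f1) (hf1X : f1 < X) (hf2 : 0 < f2) (hf2Y : f2 < Y)
    (hg : g = Real.sqrt (f2 / f1))
    (hh : h = Real.sqrt ((Y - f2) / (X - f1)))
    (hr : 0 < r)
    (hgh : h = (1 + r) ^ 2 * g)
    (hAs1 : f1 < s1) (hAs2 : s2 < f2)
    (hslope : (f2 - s2) / (s1 - f1) = Real.sqrt (g * h))
    (hn : 0 < n)
    (hp : p = n / (r * (s1 - f1)))
    (hq : q = n / (r * (f2 - s2))) :
    p / q = Real.sqrt (g * h) ∧
    ((f1, f2) ∈ B p q r n s1 s2 ∧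
      ∀ xy ∈ B p q r n s1 s2, u xy.1 xy.2 ≤ u f1 f2) ∧
    ((X - f1, Y - f2) ∈ B p q r n (X - s1) (Y - s2) ∧
      ∀ xy ∈ B p q r n (X - s1) (Y - s2), u xy.1 xy.2 ≤ u (X - f1) (Y - f2)) := by
  have hsold : 0 < s1 - f1 := sub_pos.2 hAs1
  have hbought : 0 < f2 - s2 := sub_pos.2 hAs2
  have hp_pos : 0 < p := by rw [hp]; positivity
  have hq_pos : 0 < q := by rw [hq]; positivity
  have htax : r * (q * (f2 - s2)) = n := by rw [hq]; field_simp
  have hbalance : p * (s1 - f1) = q * (f2 - s2) := by rw [hp, hq]; field_simp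
  have hratio : p / q = √(g * h) := by
    rw [← hslope, div_eq_div_iff hq_pos.ne' hsold.ne', hbalance, mul_comm]
  have hmean : √(g * h) = (1 + r) * g := by
    rw [hgh, sqrt_mul_sq_mul_self (by positivity) (hg ▸ sqrt_nonneg _)]
  have hprice : p = (1 + r) * g * q := (div_eq_iff hq_pos.ne').1 (hratio.trans hmean)
  have htangentA : p * √f1 = (1 + r) * q * √f2 := by
    rw [← sqrt_div_mul_sqrt f2 hf1, ← hg, hprice]; ring
  have htangentC : q * √(Y - f2) = (1 + r) * p * √(X - f1) := by
    rw [← sqrt_div_mul_sqrt (Y - f2) (sub_pos.2 hf1X), ← hh, hgh, hprice]; ring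
  have hA : IsDemand p q r n s1 s2 f1 f2 :=
    isDemand_of_tangent hp_pos hn.le hf1 hf2.le hbalance htax htangentA
  have hC : IsDemand q p r n (Y - s2) (X - s1) (Y - f2) (X - f1) :=
    isDemand_of_tangent hq_pos hn.le (sub_pos.2 hf2Y) (sub_pos.2 hf1X).le
      (by linear_combination -hbalance) (by linear_combination htax + r * hbalance) htangentC
  exact ⟨hratio, hA, hC.swap⟩
end

section
/- Let p, q > 0, r ≥ 0, n ≥ 0, and let (s,t) ∈ ℝ≥0² be a trader's endowment. Suppose F = (f1, f2) with f1, f2 > 0 satisfies: f2 = (p/((1+r)q))²·f1 (tangency to constraint D); p(f1 − s) + (1+r)q(f2 − t) = n (constraint D binds); f1 ≤ s; and q(f2 − t) ≥ n/(1+r). Then F lies in the budget set B(p,q,r,n,s,t) and maximizes u(x,y) = √x + √y over B(p,q,r,n,s,t). -/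
/-!
Where the trader sells good 1 and buys good 2, constraint D implies constraints E and F, so the
bundle `(f1, f2)` is feasible. For optimality only D matters: `√` is concave, so it lies below its
tangents, and adding the tangents at `f1` and `f2` bounds `u x y - u f1 f2` by a linear form in
`(x - f1, y - f2)`. Tangency says that this form is a positive multiple of the difference in
expenditure at D's prices, which is nonpositive because `(f1, f2)` exhausts the budget.
-/

theorem sqrt_le_sqrt_add_div {a x : ℝ} (ha : 0 < a) (hx : 0 ≤ x) :
    √x ≤ √a + (x - a) / (2 * √a) := by
  have amgm : 2 * √x * √a ≤ x + a := by
    simpa only [Real.sq_sqrt hx, Real.sq_sqrt ha.le] using two_mul_le_add_sq √x √a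
  calc √x ≤ (x + a) / (2 * √a) := by
        rw [le_div_iff₀ (by positivity)]
        linarith
    _ = √a + (x - a) / (2 * √a) := by
        field_simp
        rw [Real.sq_sqrt ha.le]
        ring

theorem mul_sqrt_eq_mul_sqrt_of_eq_div_sq_mul {p q a b : ℝ} (hp : 0 ≤ p) (hq : 0 < q)
    (h : b = (p / q) ^ 2 * a) : p * √a = q * √b := by
  rw [h, Real.sqrt_mul (sq_nonneg _), Real.sqrt_sq (by positivity), ← mul_assoc,
    mul_div_cancel₀ _ hq.ne']

theorem u_le_u_of_mul_sqrt_eq {p q a b x y : ℝ} (hp : 0 < p) (ha : 0 < a) (hb : 0 < b)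
    (hx : 0 ≤ x) (hy : 0 ≤ y) (htan : p * √a = q * √b)
    (hcost : p * x + q * y ≤ p * a + q * b) : u x y ≤ u a b := by
  have hsb : 0 < √b := Real.sqrt_pos.2 hb
  have marginal_utilities : (x - a) / (2 * √a) + (y - b) / (2 * √b) =
      (p * (x - a) + q * (y - b)) / (2 * (p * √a)) := by
    have hq : q = p * √a / √b := (eq_div_iff hsb.ne').2 htan.symm
    rw [hq]
    field_simp
  calc u x y ≤ (√a + (x - a) / (2 * √a)) + (√b + (y - b) / (2 * √b)) :=
        add_le_add (sqrt_le_sqrt_add_div ha hx) (sqrt_le_sqrt_add_div hb hy)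
    _ = u a b + (p * (x - a) + q * (y - b)) / (2 * (p * √a)) := by
        rw [← marginal_utilities, u]
        ring
    _ ≤ u a b := by
        have hexpenditure : p * (x - a) + q * (y - b) ≤ 0 := by linarith
        exact add_le_of_nonpos_right (div_nonpos_of_nonpos_of_nonneg hexpenditure (by positivity))

theorem mem_B_iff_of_le_of_le {p q r n s t x y : ℝ} (hp : 0 ≤ p) (hq : 0 ≤ q) (hr : 0 ≤ r)
    (hxs : x ≤ s) (hty : t ≤ y) :
    (x, y) ∈ B p q r n s t ↔
      0 ≤ x ∧ 0 ≤ y ∧ p * (x - s) + (1 + r) * q * (y - t) ≤ n := by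
  have hsale : r * (p * (x - s)) ≤ 0 :=
    mul_nonpos_of_nonneg_of_nonpos hr (mul_nonpos_of_nonneg_of_nonpos hp (sub_nonpos.2 hxs))
  have hpurchase : 0 ≤ r * (q * (y - t)) := mul_nonneg hr (mul_nonneg hq (sub_nonneg.2 hty))
  constructor
  · rintro ⟨hx, hy, hD, -, -⟩
    exact ⟨hx, hy, hD⟩
  · rintro ⟨hx, hy, hD⟩
    refine ⟨hx, hy, hD, ?_, ?_⟩ <;> dsimp only <;> linarith

/-- If F = (f₁,f₂) is tangent to constraint D, constraint D binds, f₁ ≤ s and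
q(f₂−t) ≥ n/(1+r), then F lies in the budget set and maximizes u over it. -/
theorem optimal_on_constraint_D
    (p q r n s t f1 f2 : ℝ)
    (hp : 0 < p) (hq : 0 < q) (hr : 0 ≤ r) (hn : 0 ≤ n)
    (hs : 0 ≤ s) (ht : 0 ≤ t)
    (hf1 : 0 < f1) (hf2 : 0 < f2)
    (htan : f2 = (p / ((1 + r) * q)) ^ 2 * f1)
    (hbind : p * (f1 - s) + (1 + r) * q * (f2 - t) = n)
    (hle : f1 ≤ s)
    (hbuy : q * (f2 - t) ≥ n / (1 + r)) :
    (f1, f2) ∈ B p q r n s t ∧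
    ∀ xy ∈ B p q r n s t, u xy.1 xy.2 ≤ u f1 f2 := by
  have htax : 0 < 1 + r := by positivity
  have hprice : 0 < (1 + r) * q := mul_pos htax hq
  have hbuys : t ≤ f2 := by
    have hspent : 0 ≤ q * (f2 - t) := (div_nonneg hn htax.le).trans hbuy
    exact sub_nonneg.1 (nonneg_of_mul_nonneg_right hspent hq)
  have hfoc : p * √f1 = (1 + r) * q * √f2 :=
    mul_sqrt_eq_mul_sqrt_of_eq_div_sq_mul hp.le hprice htan
  refine ⟨(mem_B_iff_of_le_of_le hp.le hq.le hr hle hbuys).2 ⟨hf1.le, hf2.le, hbind.le⟩, ?_⟩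
  rintro ⟨x, y⟩ ⟨hx, hy, hD, -, -⟩
  have hcost : p * x + (1 + r) * q * y ≤ p * f1 + (1 + r) * q * f2 := by
    dsimp only at hD
    linarith
  exact u_le_u_of_mul_sqrt_eq hp hf1 hf2 hx hy hfoc hcost
end

section
/- Let p, q > 0, r ≥ 0, n ≥ 0, and let (s,t) ∈ ℝ≥0² be a trader's endowment. Suppose F = (f1, f2) with f1, f2 > 0 satisfies: f2 = ((1+r)p/q)²·f1 (tangency to constraint F); (1+r)p(f1 − s) + q(f2 − t) = n (constraint F binds); f2 ≤ t; and p(f1 − s) ≥ n/(1+r). Then F lies in the budget set B(p,q,r,n,s,t) and maximizes u(x,y) = √x + √y over B(p,q,r,n,s,t). -/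
/-!
A concave function lies below its tangent lines. For `√` this bounds the gain in utility from a
change of bundle by the change of its cost at prices inversely proportional to `√` of the current
coordinates. Tangency says that constraint F has exactly these prices, so no bundle satisfying F
does better.
-/

theorem sqrt_le_sqrt_add_sub_div {x z : ℝ} (hx : 0 ≤ x) (hz : 0 < z) :
    √x ≤ √z + (x - z) / (2 * √z) := by
  have hpos : 0 < 2 * √z := by positivity
  rw [← sub_le_iff_le_add', le_div_iff₀ hpos]
  calc (√x - √z) * (2 * √z) = √x ^ 2 - √z ^ 2 - (√x - √z) ^ 2 := by ring
    _ ≤ √x ^ 2 - √z ^ 2 := sub_le_self _ (sq_nonneg _)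
    _ = x - z := by rw [Real.sq_sqrt hx, Real.sq_sqrt hz.le]

theorem sum_sqrt_le_sum_sqrt_of_mul_sqrt_eq {ι : Type*} {S : Finset ι} {w x z : ι → ℝ} {c : ℝ}
    (hc : 0 < c) (hx : ∀ i ∈ S, 0 ≤ x i) (hz : ∀ i ∈ S, 0 < z i)
    (hwz : ∀ i ∈ S, w i * √(z i) = c) (hcost : ∑ i ∈ S, w i * x i ≤ ∑ i ∈ S, w i * z i) :
    ∑ i ∈ S, √(x i) ≤ ∑ i ∈ S, √(z i) := by
  have tangent_line : ∀ i ∈ S, √(x i) ≤ √(z i) + (w i * x i - w i * z i) / (2 * c) := by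
    intro i hi
    have hsqrt : 0 < √(z i) := Real.sqrt_pos.2 (hz i hi)
    have hw : w i = c / √(z i) := eq_div_of_mul_eq hsqrt.ne' (hwz i hi)
    calc √(x i) ≤ √(z i) + (x i - z i) / (2 * √(z i)) :=
          sqrt_le_sqrt_add_sub_div (hx i hi) (hz i hi)
      _ = √(z i) + (w i * x i - w i * z i) / (2 * c) := by rw [hw]; field_simp
  calc ∑ i ∈ S, √(x i)
      ≤ ∑ i ∈ S, (√(z i) + (w i * x i - w i * z i) / (2 * c)) := Finset.sum_le_sum tangent_line
    _ = ∑ i ∈ S, √(z i) + (∑ i ∈ S, w i * x i - ∑ i ∈ S, w i * z i) / (2 * c) := by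
        rw [Finset.sum_add_distrib, ← Finset.sum_div, Finset.sum_sub_distrib]
    _ ≤ ∑ i ∈ S, √(z i) :=
        add_le_of_nonpos_right (div_nonpos_of_nonpos_of_nonneg (sub_nonpos.2 hcost) (by positivity))

theorem u_le_u_of_tangent {a b x y x₀ y₀ : ℝ} (ha : 0 < a) (hb : 0 < b) (hx : 0 ≤ x) (hy : 0 ≤ y)
    (hx₀ : 0 < x₀) (htan : y₀ = (a / b) ^ 2 * x₀) (hcost : a * x + b * y ≤ a * x₀ + b * y₀) :
    u x y ≤ u x₀ y₀ := by
  have hy₀ : 0 < y₀ := by rw [htan]; positivity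
  have hsqrt : b * √y₀ = a * √x₀ := by
    rw [htan, Real.sqrt_mul (sq_nonneg _), Real.sqrt_sq (div_pos ha hb).le]
    field_simp
  have hsum := sum_sqrt_le_sum_sqrt_of_mul_sqrt_eq (S := Finset.univ)
    (w := ![a, b]) (x := ![x, y]) (z := ![x₀, y₀]) (c := a * √x₀) (by positivity)
    (by simp [Fin.forall_fin_two, hx, hy]) (by simp [Fin.forall_fin_two, hx₀, hy₀])
    (by simp [Fin.forall_fin_two, hsqrt]) (by simpa [Fin.sum_univ_two] using hcost)
  simpa [u, Fin.sum_univ_two] using hsum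

theorem mem_B_of_constraint_F {p q r n s t x y : ℝ} (hp : 0 ≤ p) (hq : 0 ≤ q) (hr : 0 ≤ r)
    (hx : 0 ≤ x) (hy : 0 ≤ y) (hsx : s ≤ x) (hyt : y ≤ t)
    (hF : (1 + r) * p * (x - s) + q * (y - t) ≤ n) : (x, y) ∈ B p q r n s t := by
  have tax_on_good1_nonneg : 0 ≤ r * (p * (x - s)) :=
    mul_nonneg hr (mul_nonneg hp (sub_nonneg.2 hsx))
  have tax_on_good2_nonpos : r * (q * (y - t)) ≤ 0 :=
    mul_nonpos_of_nonneg_of_nonpos hr (mul_nonpos_of_nonneg_of_nonpos hq (sub_nonpos.2 hyt))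
  refine ⟨hx, hy, ?constraint_D, ?constraint_E, hF⟩
  case constraint_D => linarith
  case constraint_E => linarith

/-- If F = (f₁,f₂) is tangent to constraint F, constraint F binds, f₂ ≤ t and
p(f₁−s) ≥ n/(1+r), then F lies in the budget set and maximizes u over it. -/
theorem optimal_on_constraint_F
    (p q r n s t f1 f2 : ℝ)
    (hp : 0 < p) (hq : 0 < q) (hr : 0 ≤ r) (hn : 0 ≤ n)
    (hs : 0 ≤ s) (ht : 0 ≤ t)
    (hf1 : 0 < f1) (hf2 : 0 < f2)
    (htan : f2 = ((1 + r) * p / q) ^ 2 * f1)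
    (hbind : (1 + r) * p * (f1 - s) + q * (f2 - t) = n)
    (hle : f2 ≤ t)
    (hbuy : p * (f1 - s) ≥ n / (1 + r)) :
    (f1, f2) ∈ B p q r n s t ∧
    ∀ xy ∈ B p q r n s t, u xy.1 xy.2 ≤ u f1 f2 := by
  have h1r : 0 < 1 + r := by linarith
  have hs_le : s ≤ f1 := by
    have hspent : 0 ≤ p * (f1 - s) := (div_nonneg hn h1r.le).trans hbuy
    exact sub_nonneg.1 (nonneg_of_mul_nonneg_right hspent hp)
  refine ⟨mem_B_of_constraint_F hp.le hq.le hr hf1.le hf2.le hs_le hle hbind.le, ?_⟩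
  rintro ⟨x, y⟩ ⟨hx, hy, -, -, hF⟩
  have hcost : (1 + r) * p * x + q * y ≤ (1 + r) * p * f1 + q * f2 := by linarith
  exact u_le_u_of_tangent (mul_pos h1r hp) hq hx hy hf1 htan hcost
end

section
/- Let r ≥ 0, n > 0, s ≥ 0, and let the two goods have equal prices p = q > 0. For a trader with endowment (s, s) and n tokens, the unique maximizer of u(x,y) = √x + √y over the budget set B(p,p,r,n,s,s) is the symmetric bundle (s + n/(2p(1+r)), s + n/(2p(1+r))); in particular the trader's optimal final holding of each good strictly exceeds their endowment of that good. -/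
/-! The constraint in which both goods are taxed bounds the total holding of the two goods by twice
the symmetric holding, and it implies the other two constraints for a trader who only buys. Since
`√` is strictly concave and strictly increasing, equal holdings that exhaust this bound are strictly
better than every other affordable bundle. -/

theorem map_add_map_lt_of_strictConcaveOn_of_strictMonoOn {𝕜 : Type*} [Field 𝕜] [LinearOrder 𝕜]
    [IsStrictOrderedRing 𝕜] {S : Set 𝕜} {f : 𝕜 → 𝕜} (hconc : StrictConcaveOn 𝕜 S f)
    (hmono : StrictMonoOn f S) {x y m : 𝕜} (hx : x ∈ S) (hy : y ∈ S) (hm : m ∈ S)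
    (hsum : x + y ≤ m + m) (hne : (x, y) ≠ (m, m)) : f x + f y < f m + f m := by
  rcases eq_or_ne x y with rfl | hxy
  · have hxm : x ≠ m := fun h ↦ hne (by rw [h])
    have hlt : x < m := lt_of_le_of_ne (by linarith) hxm
    exact add_lt_add (hmono hx hm hlt) (hmono hx hm hlt)
  · have hmid : (1 / 2 : 𝕜) • x + (1 / 2 : 𝕜) • y ∈ S :=
      hconc.1 hx hy one_half_pos.le one_half_pos.le (add_halves 1)
    have hmid_le : (1 / 2 : 𝕜) • x + (1 / 2 : 𝕜) • y ≤ m := by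
      simp only [smul_eq_mul]
      linarith
    have hlt : (1 / 2 : 𝕜) • f x + (1 / 2 : 𝕜) • f y < f m :=
      (hconc.2 hx hy hxy one_half_pos one_half_pos (add_halves 1)).trans_le
        (hmono.monotoneOn hmid hm hmid_le)
    simp only [smul_eq_mul] at hlt
    linarith

theorem u_lt_u_diagonal {x y m : ℝ} (hx : 0 ≤ x) (hy : 0 ≤ y) (hsum : x + y ≤ m + m)
    (hne : (x, y) ≠ (m, m)) : u x y < u m m :=
  map_add_map_lt_of_strictConcaveOn_of_strictMonoOn Real.strictConcaveOn_sqrt Real.strictMonoOn_sqrt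
    hx hy (show 0 ≤ m by linarith) hsum hne

theorem add_mem_B {p q r n s t a b : ℝ} (hp : 0 ≤ p) (hq : 0 ≤ q) (hr : 0 ≤ r) (hs : 0 ≤ s)
    (ht : 0 ≤ t) (ha : 0 ≤ a) (hb : 0 ≤ b) (hcost : (1 + r) * (p * a + q * b) ≤ n) :
    (s + a, t + b) ∈ B p q r n s t := by
  have tax_fst : 0 ≤ r * (p * a) := by positivity
  have tax_snd : 0 ≤ r * (q * b) := by positivity
  refine ⟨add_nonneg hs ha, add_nonneg ht hb, ?_, ?_, ?_⟩ <;>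
    simp only [add_sub_cancel_left] <;> linarith

theorem value_le_of_mem_B {p q r n s t : ℝ} {xy : ℝ × ℝ} (hr : 0 < 1 + r)
    (h : xy ∈ B p q r n s t) :
    p * xy.1 + q * xy.2 ≤ p * s + q * t + n / (1 + r) := by
  obtain ⟨-, -, -, hcost, -⟩ := h
  have hspend : p * (xy.1 - s) + q * (xy.2 - t) ≤ n / (1 + r) := by
    rw [le_div_iff₀ hr]
    linarith
  linarith

/-- A trader on the diagonal facing equal prices p = q optimally buys equal
extra amounts n/(2p(1+r)) of both goods: the symmetric bundle is the unique
maximizer of u over the budget set, and it strictly exceeds the endowment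
in each good. -/
theorem diagonal_trader_demand (p r n s : ℝ)
    (hp : 0 < p) (hr : 0 ≤ r) (hn : 0 < n) (hs : 0 ≤ s) :
    (s + n / (2 * p * (1 + r)), s + n / (2 * p * (1 + r))) ∈ B p p r n s s ∧
    (∀ xy ∈ B p p r n s s,
      u xy.1 xy.2 ≤ u (s + n / (2 * p * (1 + r))) (s + n / (2 * p * (1 + r)))) ∧
    (∀ xy ∈ B p p r n s s,
      (∀ zw ∈ B p p r n s s, u zw.1 zw.2 ≤ u xy.1 xy.2) →
      xy = (s + n / (2 * p * (1 + r)), s + n / (2 * p * (1 + r)))) ∧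
    s < s + n / (2 * p * (1 + r)) := by
  set d := n / (2 * p * (1 + r)) with hd
  have hd_pos : 0 < d := by positivity
  have hbudget : p * (d + d) = n / (1 + r) := by
    rw [hd]
    field_simp
    norm_num
  have hmem : (s + d, s + d) ∈ B p p r n s s := by
    refine add_mem_B hp.le hp.le hr hs hs hd_pos.le hd_pos.le (le_of_eq ?_)
    rw [← mul_add, hbudget, mul_div_cancel₀ n (by positivity)]
  have hlt : ∀ xy ∈ B p p r n s s, xy ≠ (s + d, s + d) → u xy.1 xy.2 < u (s + d) (s + d) := by
    intro xy hxy
    have hvalue := value_le_of_mem_B (by positivity) hxy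
    refine u_lt_u_diagonal hxy.1 hxy.2.1 (le_of_mul_le_mul_left ?_ hp)
    linarith
  refine ⟨hmem, fun xy hxy ↦ ?_, fun xy hxy hmax ↦ ?_, lt_add_of_pos_right s hd_pos⟩
  · rcases eq_or_ne xy (s + d, s + d) with rfl | hne
    exacts [le_rfl, (hlt xy hxy hne).le]
  · by_contra hne
    exact (hlt xy hxy hne).not_ge (hmax _ hmem)
end
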